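/- Every n×n quaternion matrix A is similar over ℍ to a matrix B of the following form (a 'modified Jordan matrix'): B is block upper bidiagonal with respect to a partition (n₁,…,n_s); the diagonal blocks are λ_t·I_{n_t} where each λ_t is a complex number with nonnegative imaginary part and λ₁ ⪰ λ₂ ⪰ ⋯ ⪰ λ_s; the superdiagonal block G_{t,t+1} equals 0 if λ_t ≠ λ_{t+1}, while if λ_t = λ_{t+1} then n_t ≥ n_{t+1} and G_{t,t+1} = [I_{n_{t+1}}; 0] of size n_t×n_{t+1}; all other blocks are zero. -/

import Mathlib

open Matrix
open scoped Quaternion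

noncomputable section

/-- A quaternion matrix `U` is unitary if `Uᴴ * U = 1`. -/
def IsUnitaryM {m : Type*} [Fintype m] [DecidableEq m] (U : Matrix m m ℍ[ℝ]) : Prop :=
  Uᴴ * U = 1

/-- `A` and `B` are unitarily similar if `A = Uᴴ * B * U` for some unitary `U`. -/
def UnitarilySimilar {m : Type*} [Fintype m] [DecidableEq m] (A B : Matrix m m ℍ[ℝ]) : Prop :=
  ∃ U : Matrix m m ℍ[ℝ], IsUnitaryM U ∧ A = Uᴴ * B * U

/-- The embedding of `ℂ = ℝ + ℝi` into the quaternions. -/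
def cq (z : ℂ) : ℍ[ℝ] := ⟨z.re, z.im, 0, 0⟩

/-- The ordering `⪰` on complex numbers: `a+bi ⪰ c+di` iff (`a ≥ c` and `b = d`) or `b > d`. -/
def csucceq (z w : ℂ) : Prop := (w.re ≤ z.re ∧ z.im = w.im) ∨ w.im < z.im

/-- `A` and `B` are similar over `ℍ`: `A = S⁻¹ * B * S` for some invertible `S`. -/
def SimilarQ {m : Type*} [Fintype m] [DecidableEq m] (A B : Matrix m m ℍ[ℝ]) : Prop :=
  ∃ S : (Matrix m m ℍ[ℝ])ˣ, A = (S⁻¹).val * B * S.val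

/-- `psum sz m` is the sum of the first `m` block sizes: the starting index of block `m`. -/
def psum {s : ℕ} (sz : Fin s → ℕ) (m : ℕ) : ℕ :=
  ∑ t ∈ Finset.range m, if h : t < s then sz ⟨t, h⟩ else 0

/-- Row/column index `r` belongs to the `i`-th diagonal block of the partition `sz`. -/
def InBlock {s : ℕ} (sz : Fin s → ℕ) (i : Fin s) (r : ℕ) : Prop :=
  psum sz i ≤ r ∧ r < psum sz ((i : ℕ) + 1)

/-- `B` is a modified Jordan matrix: block upper bidiagonal for a partition `sz` with `s`
blocks; diagonal blocks `λ_t • I` with `λ_t` complex with nonnegative imaginary part and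
`λ_1 ⪰ ⋯ ⪰ λ_s`; superdiagonal block `G_{t,t+1} = 0` if `λ_t ≠ λ_{t+1}` while if
`λ_t = λ_{t+1}` then `n_t ≥ n_{t+1}` and `G_{t,t+1} = [I; 0]`; all other blocks zero. -/
def IsModifiedJordan {n : ℕ} (B : Matrix (Fin n) (Fin n) ℍ[ℝ]) : Prop :=
  ∃ (s : ℕ) (sz : Fin s → ℕ) (lam : Fin s → ℂ),
    (∀ t, 0 < sz t) ∧ (∑ t, sz t) = n ∧
    (∀ t, 0 ≤ (lam t).im) ∧
    (∀ (t : Fin s) (h : (t : ℕ) + 1 < s), csucceq (lam t) (lam ⟨(t : ℕ) + 1, h⟩)) ∧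
    (∀ (x y : Fin n) (t : Fin s), InBlock sz t x → InBlock sz t y →
        B x y = if x = y then cq (lam t) else 0) ∧
    (∀ (x y : Fin n) (t u : Fin s), InBlock sz t x → InBlock sz u y →
        (u : ℕ) ≠ (t : ℕ) → (u : ℕ) ≠ (t : ℕ) + 1 → B x y = 0) ∧
    (∀ (t : Fin s) (h : (t : ℕ) + 1 < s),
        (lam t ≠ lam ⟨(t : ℕ) + 1, h⟩ →
          ∀ x y : Fin n, InBlock sz t x → InBlock sz ⟨(t : ℕ) + 1, h⟩ y → B x y = 0) ∧
        (lam t = lam ⟨(t : ℕ) + 1, h⟩ →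
          sz ⟨(t : ℕ) + 1, h⟩ ≤ sz t ∧
          ∀ x y : Fin n, InBlock sz t x → InBlock sz ⟨(t : ℕ) + 1, h⟩ y →
            B x y = if (x : ℕ) - psum sz t = (y : ℕ) - psum sz ((t : ℕ) + 1)
              then 1 else 0))


/-- A vanishing combination of the array `e`, over a finite box, has zero coefficients at the
positions lying in the staircase `j < a i`. -/
def StaircaseIndep (D : Type*) {V : Type*} [DivisionRing D] [AddCommGroup V] [Module D V]
    (a : ℕ → ℕ) (e : ℕ → ℕ → V) : Prop :=
  ∀ (m M : ℕ) (f : ℕ → ℕ → D),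
    ∑ i ∈ Finset.range m, ∑ j ∈ Finset.range M, f i j • e i j = 0 →
      ∀ i < m, ∀ j < M, j < a i → f i j = 0

/-- A finite-dimensional subspace has a basis indexed by the interval `[n₀, n₀ + d)`. -/
theorem exists_basis_on_Ico {D V : Type*} [DivisionRing D] [AddCommGroup V] [Module D V]
    (C : Submodule D V) [FiniteDimensional D C] (n₀ : ℕ) :
    ∃ (d : ℕ) (c : ℕ → V), (∀ j, c j ∈ C) ∧ (∀ j, j < n₀ → c j = 0) ∧
      (∀ j, n₀ + d ≤ j → c j = 0) ∧ C ≤ Submodule.span D (Set.range c) ∧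
      ∀ (M : ℕ) (f : ℕ → D), ∑ j ∈ Finset.range M, f j • c j = 0 →
        ∀ j < M, n₀ ≤ j → j < n₀ + d → f j = 0 := by
  classical
  let b := Module.finBasis D C
  set d := Module.finrank D C with hd
  let c : ℕ → V := fun j => if h : n₀ ≤ j ∧ j < n₀ + d then
    (b ⟨j - n₀, by omega⟩ : V) else 0
  have hc : ∀ j (h : n₀ ≤ j ∧ j < n₀ + d), c j = b ⟨j - n₀, by omega⟩ := fun j h => dif_pos h
  have hc0 : ∀ j, ¬ (n₀ ≤ j ∧ j < n₀ + d) → c j = 0 := fun j h => dif_neg h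
  refine ⟨d, c, fun j => ?_, fun j hj => hc0 j (by omega), fun j hj => hc0 j (by omega), ?_, ?_⟩
  · by_cases h : n₀ ≤ j ∧ j < n₀ + d
    · rw [hc j h]; exact (b _).2
    · rw [hc0 j h]; exact C.zero_mem
  · have h1 : C = Submodule.span D (Set.range fun k => (b k : V)) := by
      have := congrArg (Submodule.map C.subtype) b.span_eq
      rw [Submodule.map_span, Submodule.map_top, Submodule.range_subtype, ← Set.range_comp] at this
      exact this.symm
    conv_lhs => rw [h1]
    refine Submodule.span_mono ?_
    rintro _ ⟨k, rfl⟩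
    refine ⟨n₀ + k, ?_⟩
    rw [hc _ (by have := k.2; omega)]
    simp
  · intro M f hf j hjM hj1 hj2
    have hli : LinearIndepOn D c (Set.Ico n₀ (n₀ + d)) := by
      have h1 : LinearIndependent D (fun k => (b k : V)) :=
        b.linearIndependent.map' C.subtype C.ker_subtype
      have h2 := h1.comp
        (fun x : Set.Ico n₀ (n₀ + d) => (⟨x.1 - n₀, by have := x.2.1; have := x.2.2; omega⟩ : Fin d))
        (fun x y hxy => by
          have hx := x.2.1
          have hy := y.2.1
          simp only [Fin.mk.injEq] at hxy
          exact Subtype.ext (by omega))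
      have h3 : (fun x : Set.Ico n₀ (n₀ + d) => c x) = (fun k => (b k : V)) ∘
          (fun x : Set.Ico n₀ (n₀ + d) =>
            (⟨x.1 - n₀, by have := x.2.1; have := x.2.2; omega⟩ : Fin d)) := by
        ext x
        exact hc x.1 x.2
      unfold LinearIndepOn
      rw [h3]; exact h2
    have hsub : LinearIndepOn D c
        ((Finset.range M).filter fun j => n₀ ≤ j ∧ j < n₀ + d : Finset ℕ) :=
      hli.mono (by intro x hx; simp at hx; exact hx.2)
    rw [linearIndepOn_finset_iff] at hsub
    refine hsub f ?_ j (by simp; omega)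
    rw [← hf]
    refine Finset.sum_subset (Finset.filter_subset _ _) fun x hx hx' => ?_
    rw [hc0 x (by simp at hx hx'; omega), smul_zero]

/-- **Weyr basis of a nilpotent map**: an invariant subspace on which `N` is nilpotent has a basis
arranged in a staircase whose rows are mapped by `N` to the next ones. -/
theorem exists_staircase_of_nilpotent {D V : Type*} [DivisionRing D] [AddCommGroup V] [Module D V]
    [FiniteDimensional D V] (N : V →ₗ[D] V) (k : ℕ) (W : Submodule D V) (hW : W.map N ≤ W)
    (hk : ∀ v ∈ W, (N ^ k) v = 0) :
    ∃ (a : ℕ → ℕ) (e : ℕ → ℕ → V), Antitone a ∧ (∀ i j, N (e i j) = e (i + 1) j) ∧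
      (∀ i j, a i ≤ j → e i j = 0) ∧ (∀ i j, e i j ∈ W) ∧ StaircaseIndep D a e ∧
      W ≤ Submodule.span D {v | ∃ i j, v = e i j} := by
  induction k generalizing W with
  | zero =>
    refine ⟨0, 0, antitone_const, by simp, by simp, by simp, fun _ _ _ _ _ _ _ _ h => ?_,
      fun v hv => ?_⟩
    · simp at h
    · have := hk v hv
      simp only [pow_zero, Module.End.one_apply] at this
      rw [this]; exact Submodule.zero_mem _
  | succ k ih =>
    obtain ⟨a', e', ha', hN', hz', hmem', hind', hspan'⟩ := ih (W.map N) (Submodule.map_mono hW) (by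
      rintro _ ⟨v, hv, rfl⟩
      have := hk v hv
      rwa [pow_succ, Module.End.mul_apply] at this)
    choose h hhW hhN using fun j => hmem' 0 j
    obtain ⟨Q, hQ⟩ := (W.map N ⊓ LinearMap.ker N).exists_isCompl
    obtain ⟨d, c, hcC, hc0, hc1, hcs, hcind⟩ :=
      exists_basis_on_Ico ((W ⊓ LinearMap.ker N) ⊓ Q) (a' 0)
    let a : ℕ → ℕ := fun i => i.casesOn (a' 0 + d) a'
    let e : ℕ → ℕ → V := fun i => i.casesOn (fun j => if j < a' 0 then h j else c j) e'
    have he0 : ∀ j, e 0 j = if j < a' 0 then h j else c j := fun _ => rfl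
    have heS : ∀ i j, e (i + 1) j = e' i j := fun _ _ => rfl
    have hNe : ∀ i j, N (e i j) = e (i + 1) j := by
      rintro (_ | i) j
      · rw [he0, heS]
        split_ifs with hj
        · exact hhN j
        · rw [hz' 0 j (by omega)]
          exact (hcC j).1.2
      · rw [heS, heS, hN']
    have hmem : ∀ i j, e i j ∈ W := by
      rintro (_ | i) j
      · rw [he0]; split_ifs
        · exact hhW j
        · exact (hcC j).1.1
      · exact hW (hmem' i j)
    refine ⟨a, e, antitone_nat_of_succ_le ?_, hNe, ?_, hmem, ?_, ?_⟩
    · rintro (_ | i)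
      · exact Nat.le_add_right _ _
      · exact ha' (Nat.le_succ i)
    · rintro (_ | i) j hj
      · have hj : a' 0 + d ≤ j := hj
        rw [he0, if_neg (by omega), hc1 j hj]
      · exact hz' i j hj
    · intro m M f hf
      rcases m with _ | m
      · intro i hi; omega
      have key := hind' (m + 1) M f (by
        have := congrArg N hf
        simpa only [map_sum, map_smul, hNe, heS, map_zero] using this)
      rw [Finset.sum_range_succ'] at hf
      have hrow : ∑ j ∈ Finset.range M, f 0 j • e 0 j = ∑ j ∈ Finset.range M, f 0 j • c j := by
        refine Finset.sum_congr rfl fun j hj => ?_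
        rw [he0]
        split_ifs with hlt
        · rw [key 0 (by omega) j (by simpa using hj) hlt, zero_smul, zero_smul]
        · rfl
      rw [hrow] at hf
      have hC : ∑ j ∈ Finset.range M, f 0 j • c j ∈ (W ⊓ LinearMap.ker N) ⊓ Q :=
        Submodule.sum_mem _ fun j _ => Submodule.smul_mem _ _ (hcC j)
      have hR : ∑ i ∈ Finset.range m, ∑ j ∈ Finset.range M, f (i + 1) j • e (i + 1) j ∈ W.map N :=
        Submodule.sum_mem _ fun i _ => Submodule.sum_mem _ fun j _ =>
          Submodule.smul_mem _ _ (hmem' i j)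
      have hC0 : ∑ j ∈ Finset.range M, f 0 j • c j = 0 := by
        refine Submodule.disjoint_def.1 hQ.disjoint _ ⟨?_, hC.1.2⟩ hC.2
        rw [← neg_eq_of_add_eq_zero_right hf]
        exact Submodule.neg_mem _ hR
      rw [hC0, add_zero] at hf
      rintro (_ | i) hi j hj hja
      · by_cases hlt : j < a' 0
        · exact key 0 (by omega) j hj hlt
        · exact hcind M (f 0) hC0 j hj (by omega) hja
      · exact hind' m M (fun i => f (i + 1)) hf i (by omega) j hj hja
    · set S := Submodule.span D {v | ∃ i j, v = e i j} with hS
      have hNS : W.map N ≤ S := hspan'.trans (Submodule.span_mono (by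
        rintro _ ⟨i, j, rfl⟩; exact ⟨i + 1, j, rfl⟩))
      have hNS' : W.map N ≤ S.map N := by
        rw [hS, Submodule.map_span]
        refine hspan'.trans (Submodule.span_mono ?_)
        rintro _ ⟨i, j, rfl⟩
        exact ⟨e i j, ⟨i, j, rfl⟩, hNe i j⟩
      have heW : S ≤ W := by
        rw [hS, Submodule.span_le]
        rintro _ ⟨i, j, rfl⟩
        exact hmem i j
      have hK : W ⊓ LinearMap.ker N ≤ S := by
        have hle : W.map N ⊓ LinearMap.ker N ≤ W ⊓ LinearMap.ker N := inf_le_inf_right _ hW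
        have : W ⊓ LinearMap.ker N ≤
            (W.map N ⊓ LinearMap.ker N) ⊔ ((W ⊓ LinearMap.ker N) ⊓ Q) := by
          rw [inf_comm _ Q, ← sup_inf_assoc_of_le Q hle, hQ.sup_eq_top, top_inf_eq]
        refine this.trans (sup_le (inf_le_left.trans hNS) (hcs.trans ?_))
        rw [Submodule.span_le]
        rintro _ ⟨j, rfl⟩
        by_cases hj : j < a' 0
        · rw [hc0 j hj]; exact S.zero_mem
        · exact Submodule.subset_span ⟨0, j, by rw [he0, if_neg hj]⟩
      intro w hw
      obtain ⟨s, hs, hsw⟩ := hNS' (Submodule.mem_map_of_mem hw)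
      have hws : w - s ∈ S := hK ⟨W.sub_mem hw (heW hs), by
        change N (w - s) = 0
        rw [map_sub, hsw, sub_self]⟩
      simpa using S.add_mem hws hs

/-- The quaternion unit `j`. -/
def qj : ℍ[ℝ] := ⟨0, 0, 1, 0⟩

@[simp] theorem qj_re : qj.re = 0 := rfl
@[simp] theorem qj_imI : qj.imI = 0 := rfl
@[simp] theorem qj_imJ : qj.imJ = 1 := rfl
@[simp] theorem qj_imK : qj.imK = 0 := rfl
@[simp] theorem cq_re (z : ℂ) : (cq z).re = z.re := rfl
@[simp] theorem cq_imI (z : ℂ) : (cq z).imI = z.im := rfl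
@[simp] theorem cq_imJ (z : ℂ) : (cq z).imJ = 0 := rfl
@[simp] theorem cq_imK (z : ℂ) : (cq z).imK = 0 := rfl

theorem qj_mul_qj : qj * qj = -1 := by
  ext <;> simp

theorem qj_mul_cq (z : ℂ) : qj * cq z = cq (starRingEnd ℂ z) * qj := by
  ext <;> simp

theorem cq_mul_of_im_eq_zero {z : ℂ} (hz : z.im = 0) (q : ℍ[ℝ]) : cq z * q = q * cq z := by
  ext <;> simp [hz, mul_comm]

theorem eq_cq_add_cq_mul_qj (q : ℍ[ℝ]) : q = cq ⟨q.re, q.imI⟩ + cq ⟨q.imJ, q.imK⟩ * qj := by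
  ext <;> simp

theorem eq_cq_add_qj_mul_cq (q : ℍ[ℝ]) : q = cq ⟨q.re, q.imI⟩ + qj * cq ⟨q.imJ, -q.imK⟩ := by
  ext <;> simp

theorem qj_smul_qj_smul {V : Type*} [AddCommGroup V] [Module ℍ[ℝ] V] (v : V) :
    qj • qj • v = -v := by
  rw [smul_smul, qj_mul_qj, neg_smul, one_smul]

section ComplexStructure

variable {V : Type*} [AddCommGroup V] [Module ℍ[ℝ] V] [Module ℂ V]

/-- A complex subspace stable under `j`, as a quaternionic subspace. -/
def quaternionicSubmodule (hc : ∀ (z : ℂ) (v : V), z • v = cq z • v) (K : Submodule ℂ V)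
    (hK : ∀ v ∈ K, qj • v ∈ K) : Submodule ℍ[ℝ] V where
  carrier := K
  add_mem' := K.add_mem
  zero_mem' := K.zero_mem
  smul_mem' q v hv := by
    rw [eq_cq_add_cq_mul_qj q, add_smul, mul_smul, ← hc, ← hc]
    exact K.add_mem (K.smul_mem _ hv) (K.smul_mem _ (hK v hv))

theorem pow_sub_smul_qj_smul (hc : ∀ (z : ℂ) (v : V), z • v = cq z • v)
    (T : V →ₗ[ℍ[ℝ]] V) (TC : Module.End ℂ V) (hT : ∀ v, TC v = T v) (z : ℂ) (k : ℕ) (v : V) :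
    ((TC - starRingEnd ℂ z • (1 : Module.End ℂ V)) ^ k) (qj • v) =
      qj • ((TC - z • (1 : Module.End ℂ V)) ^ k) v := by
  induction k generalizing v with
  | zero => simp
  | succ k ih =>
    rw [pow_succ, pow_succ, Module.End.mul_apply, Module.End.mul_apply, ← ih]
    congr 1
    simp only [LinearMap.sub_apply, LinearMap.smul_apply, Module.End.one_apply, hT, map_smul,
      smul_sub, hc, smul_smul, qj_mul_cq]

theorem qj_smul_mem_maxGenEigenspace (hc : ∀ (z : ℂ) (v : V), z • v = cq z • v)
    (T : V →ₗ[ℍ[ℝ]] V) (TC : Module.End ℂ V) (hT : ∀ v, TC v = T v) (z : ℂ) {v : V}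
    (hv : v ∈ TC.maxGenEigenspace z) : qj • v ∈ TC.maxGenEigenspace (starRingEnd ℂ z) := by
  rw [Module.End.mem_maxGenEigenspace] at hv ⊢
  obtain ⟨k, hk⟩ := hv
  exact ⟨k, by rw [pow_sub_smul_qj_smul hc T TC hT, hk, smul_zero]⟩

/-- The staircase of a generalized eigenspace at a real eigenvalue. -/
theorem exists_staircase_of_im_eq_zero [FiniteDimensional ℍ[ℝ] V] [FiniteDimensional ℂ V]
    (hc : ∀ (z : ℂ) (v : V), z • v = cq z • v)
    (T : V →ₗ[ℍ[ℝ]] V) (TC : Module.End ℂ V) (hT : ∀ v, TC v = T v) (z : ℂ) (hz : z.im = 0) :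
    ∃ (a : ℕ → ℕ) (e : ℕ → ℕ → V), Antitone a ∧ (∀ i j, T (e i j) = cq z • e i j + e (i + 1) j) ∧
      (∀ i j, a i ≤ j → e i j = 0) ∧ (∀ i j, e i j ∈ TC.maxGenEigenspace z) ∧
      StaircaseIndep ℍ[ℝ] a e ∧
      ∀ v ∈ TC.maxGenEigenspace z, v ∈ Submodule.span ℍ[ℝ] {v | ∃ i j, v = e i j} := by
  have hconj : starRingEnd ℂ z = z := Complex.conj_eq_iff_im.2 hz
  let W := quaternionicSubmodule hc (TC.maxGenEigenspace z) fun v hv => by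
    simpa only [hconj] using qj_smul_mem_maxGenEigenspace hc T TC hT z hv
  let N : V →ₗ[ℍ[ℝ]] V :=
    { toFun := fun v => T v - cq z • v
      map_add' := fun v w => by rw [map_add, smul_add]; abel
      map_smul' := fun q v => by
        rw [map_smul, smul_smul, cq_mul_of_im_eq_zero hz, ← smul_smul, ← smul_sub]; rfl }
  have hN : ∀ v, N v = (TC - z • (1 : Module.End ℂ V)) v := fun v => by
    simp [N, hT, hc]
  have hNk : ∀ k v, (N ^ k) v = ((TC - z • (1 : Module.End ℂ V)) ^ k) v := by
    intro k
    induction k with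
    | zero => simp
    | succ k ih =>
      intro v
      rw [pow_succ, pow_succ, Module.End.mul_apply, Module.End.mul_apply, ih, hN]
  obtain ⟨a, e, ha, hNe, hz', hmem, hind, hspan⟩ := exists_staircase_of_nilpotent N
    (TC.maxGenEigenspaceIndex z) W
    (by
      rintro _ ⟨v, hv, rfl⟩
      rw [hN]
      exact Module.End.mapsTo_maxGenEigenspace_of_comm
        (Algebra.mul_sub_algebraMap_commutes TC z) z hv)
    (fun v hv => by
      have hv : v ∈ TC.maxGenEigenspace z := hv
      rw [Module.End.maxGenEigenspace_eq, Module.End.mem_genEigenspace_nat] at hv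
      rw [hNk]; exact hv)
  refine ⟨a, e, ha, fun i j => ?_, hz', hmem, hind, fun v hv => hspan hv⟩
  rw [← hNe]
  simp [N]

/-- The staircase of a generalized eigenspace at a nonreal eigenvalue. -/
theorem exists_staircase_of_im_ne_zero [FiniteDimensional ℂ V]
    (hc : ∀ (z : ℂ) (v : V), z • v = cq z • v)
    (T : V →ₗ[ℍ[ℝ]] V) (TC : Module.End ℂ V) (hT : ∀ v, TC v = T v) (z : ℂ) (hz : z.im ≠ 0) :
    ∃ (a : ℕ → ℕ) (e : ℕ → ℕ → V), Antitone a ∧ (∀ i j, T (e i j) = cq z • e i j + e (i + 1) j) ∧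
      (∀ i j, a i ≤ j → e i j = 0) ∧ (∀ i j, e i j ∈ TC.maxGenEigenspace z) ∧
      StaircaseIndep ℍ[ℝ] a e ∧
      ∀ v ∈ TC.maxGenEigenspace z, v ∈ Submodule.span ℍ[ℝ] {v | ∃ i j, v = e i j} := by
  have hconj : z ≠ starRingEnd ℂ z := fun h => hz (Complex.conj_eq_iff_im.1 h.symm)
  obtain ⟨a, e, ha, hNe, hz', hmem, hind, hspan⟩ := exists_staircase_of_nilpotent
    (TC - z • (1 : Module.End ℂ V)) (TC.maxGenEigenspaceIndex z) (TC.maxGenEigenspace z)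
    (by
      rintro _ ⟨v, hv, rfl⟩
      exact Module.End.mapsTo_maxGenEigenspace_of_comm
        (Algebra.mul_sub_algebraMap_commutes TC z) z hv)
    (fun v hv => by
      rw [Module.End.maxGenEigenspace_eq, Module.End.mem_genEigenspace_nat] at hv
      exact hv)
  refine ⟨a, e, ha, fun i j => ?_, hz', hmem, ?_, fun v hv => ?_⟩
  · rw [← hNe, ← hT, ← hc]
    simp
  · intro m M f hf
    let u : ℕ → ℕ → ℂ := fun i j => ⟨(f i j).re, (f i j).imI⟩
    let w : ℕ → ℕ → ℂ := fun i j => ⟨(f i j).imJ, -(f i j).imK⟩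
    have hsplit : (∑ i ∈ Finset.range m, ∑ j ∈ Finset.range M, u i j • e i j) +
        qj • ∑ i ∈ Finset.range m, ∑ j ∈ Finset.range M, w i j • e i j = 0 := by
      rw [← hf]
      simp only [Finset.smul_sum, ← Finset.sum_add_distrib]
      refine Finset.sum_congr rfl fun i _ => Finset.sum_congr rfl fun j _ => ?_
      rw [hc, hc, smul_smul, ← add_smul, ← eq_cq_add_qj_mul_cq]
    have hmemsum : ∀ g : ℕ → ℕ → ℂ, ∑ i ∈ Finset.range m, ∑ j ∈ Finset.range M, g i j • e i j ∈
        TC.maxGenEigenspace z := fun g =>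
      Submodule.sum_mem _ fun i _ => Submodule.sum_mem _ fun j _ => Submodule.smul_mem _ _ (hmem i j)
    have hdisj := TC.independent_maxGenEigenspace.pairwiseDisjoint hconj
    have hu : ∑ i ∈ Finset.range m, ∑ j ∈ Finset.range M, u i j • e i j = 0 := by
      refine Submodule.disjoint_def.1 hdisj _ (hmemsum u) ?_
      rw [eq_neg_of_add_eq_zero_left hsplit]
      exact Submodule.neg_mem _ (qj_smul_mem_maxGenEigenspace hc T TC hT z (hmemsum w))
    have hw : ∑ i ∈ Finset.range m, ∑ j ∈ Finset.range M, w i j • e i j = 0 := by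
      rw [hu, zero_add] at hsplit
      rw [← neg_eq_zero, ← qj_smul_qj_smul, hsplit, smul_zero]
    intro i hi j hj hja
    have h1 := hind m M u hu i hi j hj hja
    have h2 := hind m M w hw i hi j hj hja
    simp only [u, w, Complex.ext_iff, Complex.zero_re, Complex.zero_im, neg_eq_zero] at h1 h2
    ext
    exacts [h1.1, h1.2, h2.1, h2.2]
  · refine Submodule.span_induction (p := fun v _ => v ∈ Submodule.span ℍ[ℝ] {v | ∃ i j, v = e i j})
      (fun x hx => Submodule.subset_span hx) (Submodule.zero_mem _)
      (fun x y _ _ hx hy => Submodule.add_mem _ hx hy) (fun c x _ hx => ?_) (hspan hv)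
    rw [hc]
    exact Submodule.smul_mem _ _ hx

/-- A complex number with nonnegative imaginary part. -/
abbrev UpperComplex : Type := {z : ℂ // 0 ≤ z.im}

/-- The staircases of the different eigenvalues together form a quaternionic basis. -/
theorem exists_staircases [FiniteDimensional ℍ[ℝ] V] [FiniteDimensional ℂ V]
    (hc : ∀ (z : ℂ) (v : V), z • v = cq z • v) (T : V →ₗ[ℍ[ℝ]] V) :
    ∃ (a : UpperComplex → ℕ → ℕ) (e : UpperComplex → ℕ → ℕ → V), (∀ z, Antitone (a z)) ∧
      (∀ z i j, T (e z i j) = cq z • e z i j + e z (i + 1) j) ∧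
      (∀ z i j, a z i ≤ j → e z i j = 0) ∧
      LinearIndependent ℍ[ℝ]
        (fun x : Σ z : UpperComplex, {p : ℕ × ℕ // p.2 < a z p.1} => e x.1 x.2.1.1 x.2.1.2) ∧
      Submodule.span ℍ[ℝ] {v | ∃ z i j, v = e z i j} = ⊤ := by
  classical
  let TC : Module.End ℂ V :=
    { toFun := T
      map_add' := T.map_add
      map_smul' := fun z v => by simp [hc] }
  have hT : ∀ v, TC v = T v := fun _ => rfl
  have key : ∀ z : UpperComplex, ∃ (a : ℕ → ℕ) (e : ℕ → ℕ → V), Antitone a ∧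
      (∀ i j, T (e i j) = cq z • e i j + e (i + 1) j) ∧
      (∀ i j, a i ≤ j → e i j = 0) ∧ (∀ i j, e i j ∈ TC.maxGenEigenspace z) ∧
      StaircaseIndep ℍ[ℝ] a e ∧
      ∀ v ∈ TC.maxGenEigenspace z, v ∈ Submodule.span ℍ[ℝ] {v | ∃ i j, v = e i j} := by
    intro z
    by_cases hz : z.1.im = 0
    · exact exists_staircase_of_im_eq_zero hc T TC hT z hz
    · exact exists_staircase_of_im_ne_zero hc T TC hT z hz
  choose a e ha hTe hz hmem hind hspan using key
  refine ⟨a, e, ha, hTe, hz, ?_, ?_⟩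
  · have hJ := fun z v => qj_smul_mem_maxGenEigenspace hc T TC hT z (v := v)
    let pair : UpperComplex → Set ℂ := fun z => {(z : ℂ), starRingEnd ℂ (z : ℂ)}
    have pair_inj : ∀ {z w : UpperComplex} {c : ℂ}, c ∈ pair z → c ∈ pair w → w = z := by
      rintro z w c (rfl | rfl) (h | h)
      · exact Subtype.ext h.symm
      · have h0 := congrArg Complex.im h
        have h1 := z.2
        have h2 := w.2
        rw [Complex.conj_im] at h0
        exact Subtype.ext (by rw [h, eq_comm, Complex.conj_eq_iff_im]; linarith)
      · have h0 := congrArg Complex.im h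
        have h1 := z.2
        have h2 := w.2
        rw [Complex.conj_im] at h0
        exact Subtype.ext (by rw [← h, Complex.conj_eq_iff_im]; linarith)
      · exact Subtype.ext ((starRingEnd ℂ).injective h).symm
    have hpairJ : ∀ (t : Set UpperComplex) (v : V),
        v ∈ (⨆ w ∈ ⋃ z ∈ t, pair z, TC.maxGenEigenspace w) →
        qj • v ∈ (⨆ w ∈ ⋃ z ∈ t, pair z, TC.maxGenEigenspace w) := by
      intro t v hv
      refine Submodule.iSup_induction _ (motive := fun v => qj • v ∈ _) hv (fun w x hx => ?_)
        (by rw [smul_zero]; exact Submodule.zero_mem _)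
        (fun x y hx hy => by rw [smul_add]; exact Submodule.add_mem _ hx hy)
      by_cases hw : w ∈ ⋃ z ∈ t, pair z
      · rw [iSup_pos hw] at hx
        obtain ⟨z, hzt, hz⟩ := Set.mem_iUnion₂.1 hw
        refine Submodule.mem_iSup_of_mem (starRingEnd ℂ w)
          (Submodule.mem_iSup_of_mem (Set.mem_biUnion hzt ?_) (hJ w x hx))
        rcases hz with rfl | rfl
        · exact Or.inr rfl
        · exact Or.inl (Complex.conj_conj _)
      · rw [iSup_neg hw, Submodule.mem_bot] at hx
        rw [hx, smul_zero]
        exact Submodule.zero_mem _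
    let G : Set UpperComplex → Submodule ℍ[ℝ] V := fun t =>
      quaternionicSubmodule hc (⨆ w ∈ ⋃ z ∈ t, pair z, TC.maxGenEigenspace w) (hpairJ t)
    have hG : ∀ (t : Set UpperComplex), ∀ z ∈ t,
        Submodule.span ℍ[ℝ] (Set.range fun p : {p : ℕ × ℕ // p.2 < a z p.1} => e z p.1.1 p.1.2) ≤
          G t := by
      intro t z hzt
      rw [Submodule.span_le]
      rintro _ ⟨p, rfl⟩
      exact Submodule.mem_iSup_of_mem (z : ℂ) (Submodule.mem_iSup_of_mem
        (Set.mem_biUnion hzt (Set.mem_insert _ _)) (hmem z _ _))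
    refine linearIndependent_iUnion_finite (R := ℍ[ℝ])
      (f := fun (z : UpperComplex) (p : {p : ℕ × ℕ // p.2 < a z p.1}) => e z p.1.1 p.1.2) ?_ ?_
    · intro z
      rw [linearIndependent_iff']
      intro s g hg p hp
      obtain ⟨m, hm⟩ : ∃ m, ∀ q ∈ s, q.1.1 < m ∧ q.1.2 < m := by
        refine ⟨s.sup (fun q => max q.1.1 q.1.2) + 1, fun q hq => ?_⟩
        have := Finset.le_sup (f := fun q : {p : ℕ × ℕ // p.2 < a z p.1} => max q.1.1 q.1.2) hq
        exact ⟨by omega, by omega⟩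
      let f : ℕ → ℕ → ℍ[ℝ] := fun i j =>
        if h : j < a z i then if (⟨(i, j), h⟩ : {p : ℕ × ℕ // p.2 < a z p.1}) ∈ s then
          g ⟨(i, j), h⟩ else 0 else 0
      have hfp : ∀ q : {p : ℕ × ℕ // p.2 < a z p.1}, q ∈ s → f q.1.1 q.1.2 = g q := by
        rintro ⟨⟨i, j⟩, h⟩ hq
        simp only [f]
        rw [dif_pos h, if_pos hq]
      rw [← hfp p hp]
      refine hind z m m f ?_ _ (hm p hp).1 _ (hm p hp).2 p.2
      rw [← hg, ← Finset.sum_product']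
      symm
      refine Finset.sum_of_injOn (fun q => q.1) Subtype.val_injective.injOn ?_ ?_ ?_
      · intro q hq
        simpa using hm q hq
      · rintro ⟨i, j⟩ _ hij
        have : f i j = 0 := by
          simp only [f]
          split_ifs with h h'
          · exact absurd ⟨_, h', rfl⟩ hij
          · rfl
          · rfl
        simp [this]
      · intro q hq
        rw [hfp q hq]
    · intro z t _ hzt
      have hle : (⨆ w ∈ t, Submodule.span ℍ[ℝ]
          (Set.range fun p : {p : ℕ × ℕ // p.2 < a w p.1} => e w p.1.1 p.1.2)) ≤ G t :=
        iSup₂_le fun w hw => hG t w hw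
      refine Disjoint.mono (hG {z} z rfl) hle ?_
      rw [Submodule.disjoint_def]
      intro x hx hx'
      have hd : Disjoint (⋃ w ∈ ({z} : Set UpperComplex), pair w) (⋃ w ∈ t, pair w) := by
        rw [Set.disjoint_left]
        intro c hc1 hc2
        obtain ⟨z', rfl, h1⟩ := Set.mem_iUnion₂.1 hc1
        obtain ⟨w, hw, h2⟩ := Set.mem_iUnion₂.1 hc2
        exact hzt (pair_inj h1 h2 ▸ hw)
      exact Submodule.disjoint_def.1
        (TC.independent_maxGenEigenspace.disjoint_biSup_biSup hd) x hx hx'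
  · rw [eq_top_iff]
    intro v _
    set S := Submodule.span ℍ[ℝ] {v | ∃ z i j, v = e z i j} with hS
    have hup : ∀ z : UpperComplex, ∀ v ∈ TC.maxGenEigenspace z, v ∈ S := fun z v hv =>
      Submodule.span_mono (by rintro _ ⟨i, j, rfl⟩; exact ⟨z, i, j, rfl⟩) (hspan z v hv)
    have hall : ∀ z : ℂ, ∀ v ∈ TC.maxGenEigenspace z, v ∈ S := by
      intro z v hv
      rcases le_total 0 z.im with h | h
      · exact hup ⟨z, h⟩ v hv
      · have := hup ⟨starRingEnd ℂ z, by simpa using h⟩ _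
          (qj_smul_mem_maxGenEigenspace hc T TC hT z hv)
        have := S.smul_mem (-qj) this
        rwa [neg_smul, qj_smul_qj_smul, neg_neg] at this
    have hv : v ∈ ⨆ z, TC.maxGenEigenspace z := by
      rw [Module.End.iSup_maxGenEigenspace_eq_top]; trivial
    refine Submodule.iSup_induction _ (motive := fun v => v ∈ S) hv hall S.zero_mem
      fun x y hx hy => S.add_mem hx hy

end ComplexStructure

theorem psum_succ {s : ℕ} (sz : Fin s → ℕ) (t : Fin s) :
    psum sz ((t : ℕ) + 1) = psum sz t + sz t := by
  simp [psum, Finset.sum_range_succ]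

theorem psum_mono {s : ℕ} (sz : Fin s → ℕ) : Monotone (psum sz) := fun _ _ h =>
  Finset.sum_le_sum_of_subset (Finset.range_mono h)

theorem InBlock.eq {s : ℕ} {sz : Fin s → ℕ} {t u : Fin s} {r : ℕ} (ht : InBlock sz t r)
    (hu : InBlock sz u r) : t = u := by
  rcases lt_trichotomy t u with h | h | h
  · have := psum_mono sz (show (t : ℕ) + 1 ≤ u from h)
    have := ht.2
    have := hu.1
    omega
  · exact h
  · have := psum_mono sz (show (u : ℕ) + 1 ≤ t from h)
    have := hu.2
    have := ht.1
    omega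

theorem finSigmaFinEquiv_eq_psum_add {s : ℕ} (sz : Fin s → ℕ) (p : Σ t : Fin s, Fin (sz t)) :
    (finSigmaFinEquiv p : ℕ) = psum sz p.1 + p.2 := by
  rw [finSigmaFinEquiv_apply, psum, Finset.sum_range]
  congr 1
  refine Finset.sum_congr rfl fun i _ => ?_
  rw [dif_pos (i.2.trans p.1.2)]
  rfl

/-- A basis on which `A`, acting on row vectors, has the shape prescribed by a modified Jordan
matrix yields a similarity of `A` with that matrix. -/
theorem exists_isModifiedJordan_of_basis {n : ℕ} (A : Matrix (Fin n) (Fin n) ℍ[ℝ])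
    {s : ℕ} (sz : Fin s → ℕ) (lam : Fin s → ℂ) (E : Fin s → ℕ → Fin n → ℍ[ℝ])
    (hpos : ∀ t, 0 < sz t) (him : ∀ t, 0 ≤ (lam t).im)
    (hord : ∀ (t : Fin s) (h : (t : ℕ) + 1 < s), csucceq (lam t) (lam ⟨(t : ℕ) + 1, h⟩))
    (hle : ∀ t u : Fin s, (u : ℕ) = t + 1 → lam t = lam u → sz u ≤ sz t)
    (hE0 : ∀ t j, sz t ≤ j → E t j = 0)
    (hE : ∀ t u : Fin s, (u : ℕ) = t + 1 → lam t = lam u → ∀ j,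
      E t j ᵥ* A = cq (lam t) • E t j + E u j)
    (hE' : ∀ t : Fin s, (∀ u : Fin s, (u : ℕ) = t + 1 → lam t ≠ lam u) → ∀ j,
      E t j ᵥ* A = cq (lam t) • E t j)
    (hli : LinearIndependent ℍ[ℝ] (fun p : Σ t : Fin s, Fin (sz t) => E p.1 p.2))
    (hsp : Submodule.span ℍ[ℝ] (Set.range fun p : Σ t : Fin s, Fin (sz t) => E p.1 p.2) = ⊤) :
    ∃ B : Matrix (Fin n) (Fin n) ℍ[ℝ], IsModifiedJordan B ∧ SimilarQ A B := by
  classical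
  have hn : ∑ t, sz t = n := by
    have := Module.finrank_eq_card_basis (Module.Basis.mk hli hsp.ge)
    simpa using this.symm
  let φ : (Σ t : Fin s, Fin (sz t)) ≃ Fin n := finSigmaFinEquiv.trans (finCongr hn)
  have hφ : ∀ p, (φ p : ℕ) = psum sz p.1 + p.2 := fun p => finSigmaFinEquiv_eq_psum_add sz p
  have hφb : ∀ p t, InBlock sz t (φ p) → p.1 = t := fun p t h =>
    InBlock.eq ⟨by rw [hφ]; omega, by rw [hφ, psum_succ]; have := p.2.2; omega⟩ h
  let β : (Σ t : Fin s, Fin (sz t)) → (Σ t : Fin s, Fin (sz t)) → ℍ[ℝ] := fun p q =>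
    if p = q then cq (lam p.1) else
      if (q.1 : ℕ) = p.1 + 1 ∧ lam p.1 = lam q.1 ∧ (p.2 : ℕ) = q.2 then 1 else 0
  let B : Matrix (Fin n) (Fin n) ℍ[ℝ] := Matrix.of fun x y => β (φ.symm x) (φ.symm y)
  have hB : ∀ p q, B (φ p) (φ q) = β p q := fun p q => by simp [B]
  have hne : ∀ p q : (Σ t : Fin s, Fin (sz t)), p.1 ≠ q.1 → p ≠ q := fun p q h h' => h (h' ▸ rfl)
  refine ⟨B, ⟨s, sz, lam, hpos, hn, him, hord, ?_, ?_, ?_⟩, ?_⟩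
  · intro x y t hx hy
    obtain ⟨p, rfl⟩ := φ.surjective x
    obtain ⟨q, rfl⟩ := φ.surjective y
    obtain rfl := hφb p t hx
    have hq := hφb q _ hy
    rw [hB]
    simp only [β, φ.injective.eq_iff]
    have hq' := congrArg Fin.val hq
    rw [if_neg (fun h : _ ∧ _ => by have := h.1; omega)]
  · intro x y t u hx hy h1 h2
    obtain ⟨p, rfl⟩ := φ.surjective x
    obtain ⟨q, rfl⟩ := φ.surjective y
    obtain rfl := hφb p t hx
    obtain rfl := hφb q u hy
    rw [hB]
    simp only [β]
    rw [if_neg (hne p q fun h => h1 (by rw [h])), if_neg fun h => h2 h.1]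
  · intro t ht
    refine ⟨fun hl x y hx hy => ?_, fun hl => ⟨hle _ _ rfl hl, fun x y hx hy => ?_⟩⟩
    all_goals
      obtain ⟨p, rfl⟩ := φ.surjective x
      obtain ⟨q, rfl⟩ := φ.surjective y
      obtain rfl := hφb p t hx
      have hq := hφb q _ hy
      have hq' : (q.1 : ℕ) = p.1 + 1 := by rw [hq]
      have hpq : p ≠ q := hne p q fun h => by rw [h] at hq'; omega
      rw [hB]
      simp only [β]
      rw [if_neg hpq]
    · rw [if_neg]
      rintro ⟨-, h, -⟩
      exact hl (by rw [h, hq])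
    · rw [hφ, hφ, hq']
      have hlq : lam p.1 = lam q.1 := hl.trans (congrArg lam hq.symm)
      simp only [Nat.add_sub_cancel_left, true_and, hlq]
  · let S : Matrix (Fin n) (Fin n) ℍ[ℝ] := Matrix.of fun x => E (φ.symm x).1 (φ.symm x).2
    have hS : ∀ p, S (φ p) = E p.1 p.2 := fun p => by
      change E (φ.symm (φ p)).1 (φ.symm (φ p)).2 = _
      rw [φ.symm_apply_apply]
    have hrow : ∀ p : (Σ t : Fin s, Fin (sz t)),
        ∑ q, β p q • E q.1 q.2 = E p.1 p.2 ᵥ* A := by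
      intro p
      have hdiag : ∑ q, (if p = q then cq (lam p.1) • E q.1 q.2 else 0) =
          cq (lam p.1) • E p.1 p.2 := by simp
      by_cases hq : ∃ q : (Σ t : Fin s, Fin (sz t)),
          (q.1 : ℕ) = p.1 + 1 ∧ lam p.1 = lam q.1 ∧ (p.2 : ℕ) = q.2
      · obtain ⟨q₀, h1, h2, h3⟩ := hq
        rw [hE p.1 q₀.1 h1 h2, ← hdiag]
        have hoff : ∑ q, (if q₀ = q then E q.1 q.2 else 0) = E q₀.1 p.2 := by simp [h3]
        rw [← hoff, ← Finset.sum_add_distrib]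
        refine Finset.sum_congr rfl fun q _ => ?_
        have hiff : ((q.1 : ℕ) = p.1 + 1 ∧ lam p.1 = lam q.1 ∧ (p.2 : ℕ) = q.2) ↔ q₀ = q := by
          constructor
          · rintro ⟨h4, -, h5⟩
            obtain ⟨t, j⟩ := q
            obtain ⟨t₀, j₀⟩ := q₀
            obtain rfl : t = t₀ := Fin.ext (by simp_all)
            obtain rfl : j = j₀ := Fin.ext (by simp_all)
            rfl
          · rintro rfl
            exact ⟨h1, h2, h3⟩
        simp only [β, hiff]
        by_cases hp : p = q
        · have : q₀ ≠ q := fun h => by rw [h, hp] at h1; omega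
          simp [hp, this]
        · simp only [hp, if_false, zero_add, ite_smul, one_smul, zero_smul]
      · have hz : E p.1 p.2 ᵥ* A = cq (lam p.1) • E p.1 p.2 := by
          by_cases hu : ∃ u : Fin s, (u : ℕ) = p.1 + 1 ∧ lam p.1 = lam u
          · obtain ⟨u, h1, h2⟩ := hu
            rw [hE p.1 u h1 h2, hE0 u p.2, add_zero]
            by_contra! hlt
            exact hq ⟨⟨u, ⟨p.2, hlt⟩⟩, h1, h2, rfl⟩
          · push Not at hu
            exact hE' p.1 hu p.2
        rw [hz, ← hdiag]
        refine Finset.sum_congr rfl fun q _ => ?_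
        simp only [β, if_neg fun h => hq ⟨q, h⟩, ite_smul, zero_smul]
    have hSA : S * A = B * S := by
      ext x c : 1
      obtain ⟨p, rfl⟩ := φ.surjective x
      have h1 : (S * A) (φ p) = S (φ p) ᵥ* A := rfl
      rw [h1, hS, ← hrow, Finset.sum_apply, Matrix.mul_apply, ← φ.sum_comp]
      refine Finset.sum_congr rfl fun q _ => ?_
      rw [hB, hS]
      rfl
    have hR : ∀ x : Fin n, ∃ c : (Σ t : Fin s, Fin (sz t)) → ℍ[ℝ],
        ∑ q, c q • E q.1 q.2 = (1 : Matrix (Fin n) (Fin n) ℍ[ℝ]) x := fun x =>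
      Submodule.mem_span_range_iff_exists_fun _ |>.1 (hsp ▸ Submodule.mem_top)
    choose R hR using hR
    have hRS : (Matrix.of fun x y => R x (φ.symm y)) * S = 1 := by
      ext x c : 1
      rw [← hR, Finset.sum_apply, Matrix.mul_apply, ← φ.sum_comp]
      refine Finset.sum_congr rfl fun q _ => ?_
      rw [hS]
      simp
    refine ⟨⟨S, _, mul_eq_one_comm.1 hRS, hRS⟩, ?_⟩
    change A = _ * B * S
    rw [Matrix.mul_assoc, ← hSA, ← Matrix.mul_assoc]
    erw [hRS]
    rw [Matrix.one_mul]

/-- The label of a block of a modified Jordan matrix: an eigenvalue and a height. -/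
@[ext]
structure BlockLabel where
  /-- The eigenvalue of the block. -/
  eig : UpperComplex
  /-- The height of the block among those with the same eigenvalue. -/
  height : ℕ

namespace BlockLabel

/-- The lexicographic key by which blocks are ordered. -/
def key (b : BlockLabel) : ℝ ×ₗ ℝ ×ₗ ℕ :=
  toLex (-b.eig.1.im, toLex (-b.eig.1.re, b.height))

theorem key_injective : Function.Injective key := by
  rintro ⟨⟨z, hz⟩, i⟩ ⟨⟨w, hw⟩, j⟩ h
  simp only [key, EmbeddingLike.apply_eq_iff_eq, Prod.mk.injEq, neg_inj] at h
  obtain ⟨h1, h2, rfl⟩ := h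
  obtain rfl := Complex.ext h2 h1
  rfl

instance : LinearOrder BlockLabel := LinearOrder.lift' key key_injective

theorem lt_def {b c : BlockLabel} : b < c ↔ c.eig.1.im < b.eig.1.im ∨
    b.eig.1.im = c.eig.1.im ∧ (c.eig.1.re < b.eig.1.re ∨
      b.eig.1.re = c.eig.1.re ∧ b.height < c.height) := by
  change key b < key c ↔ _
  simp only [key, Prod.Lex.toLex_lt_toLex, neg_lt_neg_iff, neg_inj]

theorem eig_ext {b c : BlockLabel} (h1 : b.eig.1.re = c.eig.1.re)
    (h2 : b.eig.1.im = c.eig.1.im) : b.eig = c.eig :=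
  Subtype.ext (Complex.ext h1 h2)

theorem csucceq_of_lt {b c : BlockLabel} (h : b < c) : csucceq b.eig c.eig := by
  rcases lt_def.1 h with h | ⟨h1, h | ⟨h2, -⟩⟩
  · exact Or.inr h
  · exact Or.inl ⟨h.le, h1⟩
  · exact Or.inl ⟨h2.ge, h1⟩

/-- The label one step above, with the same eigenvalue. -/
def succ (b : BlockLabel) : BlockLabel := ⟨b.eig, b.height + 1⟩

theorem lt_succ (b : BlockLabel) : b < b.succ :=
  lt_def.2 (Or.inr ⟨rfl, Or.inr ⟨rfl, Nat.lt_succ_self _⟩⟩)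

theorem succ_le_of_lt_of_eig_eq {b c : BlockLabel} (h : b < c) (he : b.eig = c.eig) :
    b.succ ≤ c := by
  by_contra! h'
  have h1 := lt_def.1 h
  have h2 := lt_def.1 h'
  simp only [succ, he, lt_irrefl, true_and, false_or] at h1 h2
  omega

theorem eig_eq_of_lt_of_le_succ {b c : BlockLabel} (h : b < c) (h' : c ≤ b.succ) :
    b.eig = c.eig := by
  rcases h'.eq_or_lt with rfl | h'
  · rfl
  have h1 := lt_def.1 h
  have h2 := lt_def.1 h'
  simp only [succ] at h2
  refine eig_ext ?_ ?_
  · rcases h1 with h1 | ⟨h1, h3 | ⟨h3, -⟩⟩ <;> rcases h2 with h2 | ⟨h2, h4 | ⟨h4, -⟩⟩ <;> linarith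
  · rcases h1 with h1 | ⟨h1, -⟩ <;> rcases h2 with h2 | ⟨h2, -⟩ <;> linarith

end BlockLabel

/-- **Lemma 2.2 (existence).** Every square quaternion matrix is similar over `ℍ` to a
modified Jordan matrix. -/
theorem similar_to_modified_jordan {n : ℕ} (A : Matrix (Fin n) (Fin n) ℍ[ℝ]) :
    ∃ B : Matrix (Fin n) (Fin n) ℍ[ℝ], IsModifiedJordan B ∧ SimilarQ A B := by
  classical
  let _ : Module ℂ (Fin n → ℍ[ℝ]) :=
    Module.compHom _ (Quaternion.ofComplex : ℂ →ₐ[ℝ] ℍ[ℝ]).toRingHom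
  have hc : ∀ (z : ℂ) (v : Fin n → ℍ[ℝ]), z • v = cq z • v := fun _ _ => rfl
  have : IsScalarTower ℝ ℂ (Fin n → ℍ[ℝ]) := ⟨fun r z v => by
    ext i : 1
    have : cq (r • z) = r • cq z := by ext <;> simp
    rw [hc, hc, this, smul_assoc]⟩
  have : FiniteDimensional ℂ (Fin n → ℍ[ℝ]) :=
    Module.Finite.of_restrictScalars_finite ℝ ℂ _
  obtain ⟨a, e, ha, hTe, hz, hli, hsp⟩ := exists_staircases hc A.vecMulLinear
  have hP : {b : BlockLabel | 0 < a b.eig b.height}.Finite := by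
    have := hli.finite
    rw [← Set.finite_coe_iff]
    refine Finite.of_injective (fun b : {b : BlockLabel | 0 < a b.eig b.height} =>
      (⟨b.1.eig, ⟨(b.1.height, 0), b.2⟩⟩ :
        Σ z : UpperComplex, {p : ℕ × ℕ // p.2 < a z p.1})) fun b c h => ?_
    have h' := congrArg (fun x => (x.1, x.2.1.1)) h
    exact Subtype.ext (BlockLabel.ext (congrArg Prod.fst h') (congrArg Prod.snd h'))
  set P : Finset BlockLabel := hP.toFinset with hPdef
  have hmemP : ∀ b, b ∈ P ↔ 0 < a b.eig b.height := by simp [hPdef]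
  let o : Fin P.card ≃o P := P.orderIsoOfFin rfl
  have hsucc : ∀ t u : Fin P.card, (u : ℕ) = t + 1 → (o t).1.eig = (o u).1.eig →
      (o u).1 = (o t).1.succ := by
    intro t u hu he
    have hlt : (o t).1 < (o u).1 := o.lt_iff_lt.2 (show (t : ℕ) < u by omega)
    have hle := BlockLabel.succ_le_of_lt_of_eig_eq hlt he
    have hmem : (o t).1.succ ∈ P := by
      rw [hmemP]
      have h1 := (hmemP _).1 (o u).2
      refine h1.trans_le ?_
      rw [← he]
      refine ha _ ?_
      have h2 := BlockLabel.lt_def.1 hlt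
      rw [he] at h2
      simp only [lt_irrefl, true_and, false_or] at h2
      exact h2
    obtain ⟨v, hv⟩ := o.surjective ⟨_, hmem⟩
    have h1 : t < v := o.lt_iff_lt.1 (by rw [hv]; exact BlockLabel.lt_succ _)
    have h2 : v ≤ u := o.le_iff_le.1 (by rw [hv]; exact hle)
    have : v = u := Fin.ext (by rw [Fin.lt_def] at h1; rw [Fin.le_def] at h2; omega)
    rw [← this, hv]
  have hlast : ∀ t : Fin P.card,
      (∀ u : Fin P.card, (u : ℕ) = t + 1 → ((o t).1.eig : ℂ) ≠ (o u).1.eig) →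
        ∀ j, e (o t).1.eig ((o t).1.height + 1) j = 0 := by
    intro t ht j
    apply hz
    by_contra! hlt
    have hmem : (o t).1.succ ∈ P := (hmemP _).2 (Nat.zero_lt_of_lt hlt)
    obtain ⟨v, hv⟩ := o.surjective ⟨_, hmem⟩
    have h1 : t < v := o.lt_iff_lt.1 (by rw [hv]; exact BlockLabel.lt_succ _)
    have h1' : (t : ℕ) < v := h1
    let u : Fin P.card := ⟨t + 1, by have := v.2; omega⟩
    refine ht u rfl (congrArg Subtype.val (BlockLabel.eig_eq_of_lt_of_le_succ ?_ ?_))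
    · exact o.lt_iff_lt.2 (show (t : ℕ) < t + 1 by omega)
    · have : o u ≤ o v := o.le_iff_le.2 (show (t : ℕ) + 1 ≤ v by omega)
      rw [hv] at this
      exact this
  refine exists_isModifiedJordan_of_basis A (fun t => a (o t).1.eig (o t).1.height)
    (fun t => (o t).1.eig) (fun t => e (o t).1.eig (o t).1.height)
    (fun t => (hmemP _).1 (o t).2) (fun t => (o t).1.eig.2)
    (fun t h => BlockLabel.csucceq_of_lt (o.lt_iff_lt.2 (show (t : ℕ) < t + 1 by omega)))
    (fun t u hu he => ?_) (fun t j h => hz _ _ _ h) (fun t u hu he j => ?_) (fun t ht j => ?_)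
    ?_ ?_
  · have := hsucc t u hu (Subtype.ext he)
    simp only [this]
    exact ha _ (Nat.le_succ _)
  · have := hsucc t u hu (Subtype.ext he)
    simp only [this]
    exact hTe _ _ _
  · have := hTe (o t).1.eig (o t).1.height j
    rw [hlast t ht j, add_zero] at this
    exact this
  · let f (p : Σ t, Fin (a (o t).1.eig (o t).1.height)) :
        Σ z : UpperComplex, {p : ℕ × ℕ // p.2 < a z p.1} :=
      ⟨(o p.1).1.eig, ⟨((o p.1).1.height, p.2), p.2.2⟩⟩
    suffices hf : Function.Injective f from hli.comp f hf
    rintro ⟨t, j⟩ ⟨u, k⟩ h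
    have h' := congrArg (fun x => (x.1, x.2.1)) h
    simp only [f, Prod.mk.injEq] at h'
    obtain ⟨h1, h2, h3⟩ := h'
    obtain rfl : t = u := o.injective (Subtype.ext (BlockLabel.ext h1 h2))
    rw [Fin.ext h3]
  · rw [eq_top_iff, ← hsp, Submodule.span_le]
    rintro _ ⟨z, i, j, rfl⟩
    by_cases hj : j < a z i
    · obtain ⟨t, ht⟩ := o.surjective ⟨⟨z, i⟩, (hmemP ⟨z, i⟩).2 (Nat.zero_lt_of_lt hj)⟩
      refine Submodule.subset_span ⟨⟨t, ⟨j, ?_⟩⟩, ?_⟩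
      · simpa only [ht] using hj
      · simp only [ht]
    · rw [hz z i j (by omega)]
      exact Submodule.zero_mem _
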